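/- Let 0 < α < 1 and let 𝔾 be a random variable on (0,1) with density f_𝔾(u) = (α·sin(πα)/((1−α)π))·u^{α−1}(1−u)^{α−1}/(u^{2α} − 2u^α(1−u)^α cos(πα) + (1−u)^{2α}). Define R_α(x) = E[log|x − 1/𝔾|·1(1/𝔾 ≠ x)] for x > 0. Then R_α(x) = (1/(2(1−α)))·log( x² / ((x−1)^{2α} − 2(x−1)^α cos(πα) + 1) ) for x > 1, and R_α(x) = (1/(1−α))·log( x / (1 − (1−x)^α) ) for 0 < x ≤ 1. (Proposition 5.1.) -/

import Mathlib

open MeasureTheory ProbabilityTheory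

/-- The density of the BFRY random variable `𝔾_α` on (0,1). -/
noncomputable def bfryDensity (α : ℝ) : ℝ → ℝ := fun u =>
  α * Real.sin (Real.pi * α) / ((1 - α) * Real.pi) *
    (u ^ (α - 1) * (1 - u) ^ (α - 1) /
      (u ^ (2 * α) - 2 * u ^ α * (1 - u) ^ α * Real.cos (Real.pi * α) + (1 - u) ^ (2 * α)))

namespace BFRY

open Real Set Filter Topology MeasureTheory

/-- density of `log (1/G - 1)` -/
noncomputable def p (α : ℝ) (t : ℝ) : ℝ :=
  α * Real.sin (Real.pi * α) / ((1 - α) * Real.pi) /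
    (Real.exp (α * t) - 2 * Real.cos (Real.pi * α) + Real.exp (-(α * t)))

lemma sin_pos {α : ℝ} (h0 : 0 < α) (h1 : α < 1) : 0 < Real.sin (Real.pi * α) := by
  apply Real.sin_pos_of_pos_of_lt_pi
  · positivity
  · nlinarith [Real.pi_pos]

lemma cos_lt {α : ℝ} (h0 : 0 < α) (h1 : α < 1) : Real.cos (Real.pi * α) < 1 := by
  nlinarith [sin_pos h0 h1, Real.sin_sq_add_cos_sq (Real.pi * α)]

lemma den_ge {α : ℝ} (h0 : 0 < α) (h1 : α < 1) (t : ℝ) :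
    (1 - Real.cos (Real.pi * α)) / 2 * Real.exp (α * |t|) ≤
      Real.exp (α * t) - 2 * Real.cos (Real.pi * α) + Real.exp (-(α * t)) := by
  have hc := cos_lt h0 h1
  have hc' := Real.neg_one_le_cos (Real.pi * α)
  set c := Real.cos (Real.pi * α)
  have e1 : Real.exp (α * |t|) ≤ Real.exp (α * t) + Real.exp (-(α * t)) := by
    rcases abs_cases t with ⟨h, _⟩ | ⟨h, _⟩ <;> rw [h]
    · linarith [Real.exp_pos (-(α*t))]
    · rw [mul_neg]; linarith [Real.exp_pos (α*t)]
  have e2 : 2 ≤ Real.exp (α * t) + Real.exp (-(α * t)) := by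
    have := Real.one_le_cosh (α * t)
    rw [Real.cosh_eq] at this; linarith
  nlinarith

lemma den_pos {α : ℝ} (h0 : 0 < α) (h1 : α < 1) (t : ℝ) :
    0 < Real.exp (α * t) - 2 * Real.cos (Real.pi * α) + Real.exp (-(α * t)) := by
  refine lt_of_lt_of_le ?_ (den_ge h0 h1 t)
  have := cos_lt h0 h1
  have : 0 < 1 - Real.cos (Real.pi * α) := by linarith
  positivity

lemma c_pos {α : ℝ} (h0 : 0 < α) (h1 : α < 1) :
    0 < α * Real.sin (Real.pi * α) / ((1 - α) * Real.pi) := by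
  have := sin_pos h0 h1
  have : 0 < 1 - α := by linarith
  positivity

lemma p_pos {α : ℝ} (h0 : 0 < α) (h1 : α < 1) (t : ℝ) : 0 < p α t :=
  div_pos (c_pos h0 h1) (den_pos h0 h1 t)

lemma p_cont {α : ℝ} (h0 : 0 < α) (h1 : α < 1) : Continuous (p α) := by
  unfold p
  refine Continuous.div (by fun_prop) (by fun_prop) fun t => (den_pos h0 h1 t).ne'

lemma p_bound {α : ℝ} (h0 : 0 < α) (h1 : α < 1) :
    ∃ C, 0 < C ∧ ∀ t, p α t ≤ C * Real.exp (-(α * |t|)) := by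
  have hc : 0 < 1 - Real.cos (Real.pi * α) := by linarith [cos_lt h0 h1]
  have := c_pos h0 h1
  refine ⟨α * Real.sin (Real.pi * α) / ((1 - α) * Real.pi) / ((1 - Real.cos (Real.pi * α)) / 2), by positivity, fun t => ?_⟩
  unfold p
  rw [Real.exp_neg (α * |t|), ← div_eq_mul_inv, div_div (α * Real.sin (Real.pi * α) / ((1 - α) * Real.pi))]
  gcongr
  exact den_ge h0 h1 t

lemma int_exp_abs {b : ℝ} (hb : 0 < b) : Integrable (fun t : ℝ => Real.exp (-(b * |t|))) := by
  have h1 : IntegrableOn (fun t : ℝ => Real.exp (-(b * |t|))) (Ioi 0) := by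
    refine (exp_neg_integrableOn_Ioi 0 hb).congr_fun (fun t ht => ?_) measurableSet_Ioi
    simp only [abs_of_pos (show (0:ℝ) < t from ht), neg_mul]
  rw [← integrableOn_univ, ← Iic_union_Ioi (a := (0:ℝ))]
  refine IntegrableOn.union ?_ h1
  have h2 := (integrableOn_exp_mul_Iic hb 0)
  refine h2.congr_fun (fun t ht => ?_) measurableSet_Iic
  simp only [abs_of_nonpos (show t ≤ 0 from ht), mul_neg, neg_neg]

lemma p_int {α : ℝ} (h0 : 0 < α) (h1 : α < 1) : Integrable (p α) := by
  obtain ⟨C, hC, h⟩ := p_bound h0 h1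
  refine ((int_exp_abs h0).const_mul C).mono' (p_cont h0 h1).aestronglyMeasurable
    (Eventually.of_forall fun t => ?_)
  rw [Real.norm_of_nonneg (p_pos h0 h1 t).le]; exact h t

lemma p_abs_int {α : ℝ} (h0 : 0 < α) (h1 : α < 1) : Integrable (fun t => p α t * |t|) := by
  obtain ⟨C, hC, h⟩ := p_bound h0 h1
  refine ((int_exp_abs (half_pos h0)).const_mul (C * (2 / α))).mono'
    ((p_cont h0 h1).mul continuous_abs).aestronglyMeasurable
    (Eventually.of_forall fun t => ?_)
  rw [Real.norm_of_nonneg (mul_nonneg (p_pos h0 h1 t).le (abs_nonneg t))]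
  have e : |t| ≤ 2 / α * Real.exp (α / 2 * |t|) := by
    have := Real.add_one_le_exp (α / 2 * |t|)
    calc |t| = 2 / α * (α / 2 * |t|) := by field_simp
      _ ≤ _ := by gcongr; linarith
  calc p α t * |t| ≤ (C * Real.exp (-(α * |t|))) * (2 / α * Real.exp (α / 2 * |t|)) := by
        gcongr; exact h t
    _ = C * (2 / α) * (Real.exp (-(α * |t|)) * Real.exp (α / 2 * |t|)) := by ring
    _ = _ := by rw [← Real.exp_add]; congr 2; ring

lemma p_even {α : ℝ} (t : ℝ) : p α (-t) = p α t := by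
  unfold p; congr 1; simp only [mul_neg, neg_neg]; ring

lemma p_mean {α : ℝ} : ∫ t, p α t * t = 0 := by
  have := integral_neg_eq_self (fun t : ℝ => p α t * t) volume
  simp only [p_even, mul_neg, integral_neg] at this
  linarith

/-- integrability of the log singularity -/
lemma abs_one_sub_exp (u : ℝ) : |Real.log (abs (1 - Real.exp u))| ≤
    Real.log 2 + |u| + (Icc (-1:ℝ) 1).indicator (fun u => |Real.log u|) u := by
  rcases eq_or_ne u 0 with rfl | hu
  · have := Real.log_nonneg one_le_two; simp [this]
  have hpos : 0 < |1 - Real.exp u| := by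
    rw [abs_pos, sub_ne_zero, ne_comm, Ne, Real.exp_eq_one_iff]; exact hu
  have hup : |1 - Real.exp u| ≤ 2 * Real.exp |u| := by
    have a1 : Real.exp u ≤ Real.exp |u| := Real.exp_le_exp.2 (le_abs_self u)
    have a2 : 1 ≤ Real.exp |u| := Real.one_le_exp (abs_nonneg u)
    rw [abs_le]; constructor <;> linarith [Real.exp_pos u]
  have hlo : min |u| 1 / 2 ≤ |1 - Real.exp u| := by
    rcases lt_or_gt_of_ne hu with h | h
    · rw [abs_of_neg h, abs_of_pos (by rw [sub_pos]; exact Real.exp_lt_one_iff.2 h)]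
      have a := Real.add_one_le_exp (-u)
      have b : Real.exp u * Real.exp (-u) = 1 := by rw [← Real.exp_add]; simp
      have hb : Real.exp u ≤ 1 / (1 - u) := by
        rw [le_div_iff₀ (by linarith)]
        nlinarith [Real.exp_pos u]
      have : 1 - 1 / (1 - u) = -u / (1 - u) := by field_simp [(by linarith : (1 - u) ≠ 0)]; ring
      have : min (-u) 1 / 2 ≤ -u / (1 - u) := by
        rw [div_le_div_iff₀ (by norm_num) (by linarith)]
        rcases min_cases (-u) 1 with ⟨h, _⟩ | ⟨h, _⟩ <;> rw [h] <;> nlinarith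
      linarith
    · rw [abs_of_pos h, abs_of_neg (by rw [sub_neg]; exact Real.one_lt_exp_iff.2 h)]
      have a := Real.add_one_le_exp u
      have := min_le_left u 1
      have : 0 < min u 1 := lt_min h one_pos
      linarith
  have hupl : Real.log |1 - Real.exp u| ≤ Real.log 2 + |u| := by
    have := Real.log_le_log hpos hup
    rwa [Real.log_mul (by norm_num) (Real.exp_pos _).ne', Real.log_exp] at this
  have hu' : 0 < |u| := abs_pos.2 hu
  have hm : 0 < min |u| 1 := lt_min hu' one_pos
  have hlol := Real.log_le_log (by positivity) hlo
  rw [Real.log_div hm.ne' (by norm_num)] at hlol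
  have hind : -(Icc (-1:ℝ) 1).indicator (fun u => |Real.log u|) u ≤ Real.log (min |u| 1) := by
    by_cases h : u ∈ Icc (-1:ℝ) 1
    · rw [indicator_of_mem h, min_eq_left (abs_le.2 h), Real.log_abs]
      exact neg_abs_le _
    · rw [indicator_of_notMem h, min_eq_right]
      · simp
      · by_contra hh; exact h (abs_le.1 (not_le.1 hh).le)
  have hi0 : 0 ≤ (Icc (-1:ℝ) 1).indicator (fun u => |Real.log u|) u :=
    indicator_nonneg (fun _ _ => abs_nonneg _) _
  rw [abs_le]; constructor <;> linarith

lemma p_log_int {α : ℝ} (h0 : 0 < α) (h1 : α < 1) (σ : ℝ) :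
    Integrable (fun t => p α t * |Real.log (abs (Real.exp t - Real.exp σ))|) := by
  obtain ⟨C, hC, h⟩ := p_bound h0 h1
  have hi : Integrable (fun t => (Icc (-1:ℝ) 1).indicator (fun u => |Real.log u|) (t - σ)) := by
    have : Integrable ((Icc (-1:ℝ) 1).indicator (fun u => |Real.log u|)) := by
      rw [integrable_indicator_iff measurableSet_Icc]
      have := (intervalIntegral.intervalIntegrable_log' (a := -1) (b := 1)).abs
      rwa [intervalIntegrable_iff_integrableOn_Icc_of_le (by norm_num)] at this
    exact this.comp_sub_right σ
  have hb : Integrable (fun t => p α t * (|σ| + Real.log 2 + |σ|) + p α t * |t|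
      + C * (Icc (-1:ℝ) 1).indicator (fun u => |Real.log u|) (t - σ)) :=
    (((p_int h0 h1).mul_const _).add (p_abs_int h0 h1)).add (hi.const_mul C)
  refine hb.mono' ?_ (Eventually.of_forall fun t => ?_)
  · exact ((p_cont h0 h1).measurable.mul (by fun_prop)).aestronglyMeasurable
  rw [Real.norm_of_nonneg (mul_nonneg (p_pos h0 h1 t).le (abs_nonneg _))]
  have hi0 : 0 ≤ (Icc (-1:ℝ) 1).indicator (fun u => |Real.log u|) (t - σ) :=
    indicator_nonneg (fun _ _ => abs_nonneg _) _
  have hpC : p α t ≤ C := (h t).trans (by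
    have : Real.exp (-(α * |t|)) ≤ 1 := Real.exp_le_one_iff.2 (by
      have := abs_nonneg t; nlinarith)
    nlinarith)
  have key : |Real.log (abs (Real.exp t - Real.exp σ))| ≤ |σ| + Real.log 2 + |σ| + |t|
      + (Icc (-1:ℝ) 1).indicator (fun u => |Real.log u|) (t - σ) := by
    rcases eq_or_ne t σ with rfl | hne
    · have := Real.log_nonneg one_le_two
      simp only [sub_self, abs_zero, Real.log_zero] at *
      positivity
    have e : |Real.exp t - Real.exp σ| = Real.exp σ * |1 - Real.exp (t - σ)| := by
      rw [← abs_of_pos (Real.exp_pos σ), ← abs_mul, abs_of_pos (Real.exp_pos σ), mul_sub,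
        ← Real.exp_add, abs_sub_comm]; simp
    have hpos : 0 < |1 - Real.exp (t - σ)| := by
      rw [abs_pos, sub_ne_zero, ne_comm, Ne, Real.exp_eq_one_iff, sub_eq_zero]; exact hne
    rw [e, Real.log_mul (Real.exp_pos _).ne' hpos.ne', Real.log_exp]
    have := abs_one_sub_exp (t - σ)
    have a1 := abs_add_le σ (Real.log |1 - Real.exp (t - σ)|)
    have a2 := abs_sub t σ
    linarith
  calc _ ≤ p α t * (|σ| + Real.log 2 + |σ| + |t|
      + (Icc (-1:ℝ) 1).indicator (fun u => |Real.log u|) (t - σ)) :=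
        mul_le_mul_of_nonneg_left key (p_pos h0 h1 t).le
    _ ≤ _ := by
        have := mul_le_mul_of_nonneg_right hpC hi0
        linarith

/-- the two-sided kernel -/
noncomputable def K (α : ℝ) (z : ℂ) : ℂ :=
  α / (1 - Complex.exp (-(α * z))) - 1 / (1 - Complex.exp (-z))

lemma exp_ne_one {a : ℝ} (h0 : 0 < a) (h1 : a ≤ 1) {z : ℂ} (hz : |z.im| < 2 * Real.pi) (hz0 : z ≠ 0) :
    1 - Complex.exp (-(a * z)) ≠ 0 := by
  intro h
  have h' : Complex.exp (-(a * z)) = 1 := by linear_combination -h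
  rw [Complex.exp_eq_one_iff] at h'
  obtain ⟨n, hn⟩ := h'
  have him := congrArg Complex.im hn
  have hre := congrArg Complex.re hn
  simp at him hre
  have hn0 : n = 0 := by
    by_contra hne
    have : (1:ℝ) ≤ |(n:ℝ)| := by exact_mod_cast Int.one_le_abs hne
    have e : a * |z.im| = |(n:ℝ)| * (2 * Real.pi) := by
      have := congrArg abs him
      rwa [abs_neg, abs_mul, abs_mul, abs_of_pos h0, abs_of_pos (by positivity : 0 < 2 * Real.pi)] at this
    nlinarith [Real.pi_pos, abs_nonneg z.im]
  subst hn0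
  apply hz0
  apply Complex.ext
  · rcases hre with h | h
    · exact absurd h h0.ne'
    · exact h
  · simp at him
    rcases him with h | h
    · exact absurd h h0.ne'
    · exact h

def strip : Set ℂ := {z | |z.im| < 2 * Real.pi}

lemma strip_open : IsOpen strip := isOpen_lt (by fun_prop) (by fun_prop)

/-- `K` extends holomorphically to the strip -/
lemma exists_N {α : ℝ} (h0 : 0 < α) (h1 : α < 1) :
    ∃ N : ℂ → ℂ, DifferentiableOn ℂ N strip ∧ ∀ z ≠ 0, N z = K α z := by
  have zs : strip ∈ 𝓝 (0:ℂ) := strip_open.mem_nhds (by simp [strip, Real.pi_pos])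
  let u : ℝ → ℂ → ℂ := fun a => dslope (fun z : ℂ => 1 - Complex.exp (-(a * z))) 0
  have hu : ∀ a, DifferentiableOn ℂ (u a) strip := fun a =>
    (Complex.differentiableOn_dslope zs).2 (by fun_prop)
  have hu0 : ∀ a, u a 0 = a := by
    intro a
    simp only [u, dslope_same]
    have : HasDerivAt (fun z : ℂ => 1 - Complex.exp (-(a * z))) (-(Complex.exp (-(a * 0)) * (-(a * 1)))) 0 :=
      (((hasDerivAt_id' (0:ℂ)).const_mul (a:ℂ)).neg.cexp).const_sub 1
    rw [this.deriv]; simp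
  have hu1 : ∀ a z, z ≠ 0 → u a z = (1 - Complex.exp (-(a * z))) / z := by
    intro a z hz
    simp only [u, dslope_of_ne _ hz, slope_def_field]
    simp
  have hune : ∀ a, 0 < a → a ≤ 1 → ∀ z ∈ strip, u a z ≠ 0 := by
    intro a ha ha1 z hz
    rcases eq_or_ne z 0 with rfl | h
    · rw [hu0]; exact_mod_cast ha.ne'
    · rw [hu1 a z h]; exact div_ne_zero (exp_ne_one ha ha1 hz h) h
  let Q : ℂ → ℂ := fun z => α / u α z - 1 / u 1 z
  have hQ : DifferentiableOn ℂ Q strip :=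
    ((differentiableOn_const _).div (hu α) (hune α h0 h1.le)).sub
      ((differentiableOn_const _).div (hu 1) (hune 1 one_pos le_rfl))
  refine ⟨dslope Q 0, (Complex.differentiableOn_dslope zs).2 hQ, fun z hz => ?_⟩
  have hα : (α:ℂ) ≠ 0 := by exact_mod_cast h0.ne'
  rw [dslope_of_ne _ hz, slope_def_field]
  simp only [Q, hu0, hu1 _ _ hz, K]
  simp only [Complex.ofReal_one, div_self hα, div_one, sub_self, sub_zero, one_mul]
  field_simp

lemma vert_lim {l : Filter ℝ} {F : ℂ → ℂ} {L : ℂ}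
    (hF : Tendsto F (comap Complex.re l) (𝓝 L))
    (hc : ∀ᶠ T : ℝ in l, ContinuousOn (fun y : ℝ => F (T + y * Complex.I)) (uIcc (-π) π)) :
    Tendsto (fun T : ℝ => ∫ y in (-π)..π, F (T + y * Complex.I)) l (𝓝 (2 * π * L)) := by
  rw [Metric.tendsto_nhds]
  intro ε hε
  have h2 := (Metric.tendsto_nhds.1 hF) (ε / (4 * π)) (by positivity)
  rw [eventually_comap] at h2
  filter_upwards [h2, hc] with T hT hcT
  have e : 2 * π * L = ∫ y in (-π)..π, L := by
    rw [intervalIntegral.integral_const, Complex.real_smul]; push_cast; ring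
  rw [dist_eq_norm, e, ← intervalIntegral.integral_sub hcT.intervalIntegrable (by simp)]
  have := intervalIntegral.norm_integral_le_of_norm_le_const (a := -π) (b := π)
    (f := fun y : ℝ => F (T + y * Complex.I) - L) (C := ε / (4 * π)) (by
      intro y _
      rw [← dist_eq_norm]
      exact (hT _ (by simp)).le)
  refine this.trans_lt ?_
  rw [abs_of_pos (by linarith [Real.pi_pos])]
  have : ε / (4 * π) * (π - -π) = ε / 2 := by field_simp; ring
  rw [this]; linarith

lemma exp_lim_top {a : ℝ} (ha : 0 < a) :
    Tendsto (fun z : ℂ => Complex.exp (-(a * z))) (comap Complex.re atTop) (𝓝 0) := by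
  refine Complex.tendsto_exp_comap_re_atBot.comp ?_
  rw [tendsto_comap_iff]
  have : Tendsto (fun z : ℂ => -(a * z.re)) (comap Complex.re atTop) atBot :=
    tendsto_neg_atTop_atBot.comp (tendsto_comap.const_mul_atTop ha)
  refine this.congr fun z => by simp

lemma exp_lim_bot {a : ℝ} (ha : 0 < a) :
    Tendsto (fun z : ℂ => Complex.exp (a * z)) (comap Complex.re atBot) (𝓝 0) := by
  refine Complex.tendsto_exp_comap_re_atBot.comp ?_
  rw [tendsto_comap_iff]
  have : Tendsto (fun z : ℂ => a * z.re) (comap Complex.re atBot) atBot :=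
    tendsto_comap.const_mul_atBot ha
  refine this.congr fun z => by simp

lemma K_lim_top {α : ℝ} (h0 : 0 < α) :
    Tendsto (K α) (comap Complex.re atTop) (𝓝 (α - 1)) := by
  have a := exp_lim_top h0
  have b := exp_lim_top one_pos
  have : Tendsto (K α) (comap Complex.re atTop) (𝓝 (α / (1 - 0) - 1 / (1 - 0))) := by
    unfold K
    refine (Tendsto.div tendsto_const_nhds (tendsto_const_nhds.sub a) (by simp)).sub
      (Tendsto.div tendsto_const_nhds (tendsto_const_nhds.sub ?_) (by simp))
    simpa using b
  simpa using this

lemma K_lim_bot {α : ℝ} (h0 : 0 < α) :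
    Tendsto (K α) (comap Complex.re atBot) (𝓝 0) := by
  have a := exp_lim_bot h0
  have b := exp_lim_bot one_pos
  have : Tendsto (fun z : ℂ => α * Complex.exp (α * z) / (Complex.exp (α * z) - 1) -
      Complex.exp z / (Complex.exp z - 1)) (comap Complex.re atBot)
      (𝓝 (α * 0 / (0 - 1) - 0 / (0 - 1))) := by
    simp only [Complex.ofReal_one, one_mul] at b
    refine (Tendsto.div (a.const_mul _) (a.sub tendsto_const_nhds) (by simp)).sub
      (Tendsto.div b (b.sub tendsto_const_nhds) (by simp))
  simp only [mul_zero, zero_div, sub_zero] at this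
  refine this.congr fun z => ?_
  have key : ∀ w c : ℂ, c * Complex.exp w / (Complex.exp w - 1) = c / (1 - Complex.exp (-w)) := by
    intro w c
    have : Complex.exp w - 1 = Complex.exp w * (1 - Complex.exp (-w)) := by
      rw [mul_sub, ← Complex.exp_add]; simp
    rw [this, mul_comm c, mul_div_mul_left _ _ (Complex.exp_ne_zero w)]
  unfold K
  rw [key, ← key z 1, one_mul]

lemma K_jump {α : ℝ} (h0 : 0 < α) (h1 : α < 1) (t : ℝ) :
    K α (t + (-π : ℝ) * Complex.I) - K α (t + (π : ℝ) * Complex.I)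
      = 2 * π * Complex.I * (1 - α) * p α t := by
  have ha : (1 - (α:ℂ)) ≠ 0 := by
    have : (1 - α) ≠ 0 := by linarith
    exact_mod_cast this
  have hπ : (π:ℂ) ≠ 0 := by exact_mod_cast Real.pi_ne_zero
  have e1 : Complex.exp (-((t:ℂ) + (-π : ℝ) * Complex.I)) = Complex.exp (-((t:ℂ) + (π : ℝ) * Complex.I)) := by
    rw [Complex.exp_eq_exp_iff_exists_int]
    exact ⟨1, by push_cast; ring⟩
  have e2 : Complex.exp (-(α * ((t:ℂ) + (-π : ℝ) * Complex.I))) =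
      Complex.exp (-(α * t)) * Complex.exp ((π * α : ℝ) * Complex.I) := by
    rw [← Complex.exp_add]; congr 1; push_cast; ring
  have e3 : Complex.exp (-(α * ((t:ℂ) + (π : ℝ) * Complex.I))) =
      Complex.exp (-(α * t)) * Complex.exp (-(π * α : ℝ) * Complex.I) := by
    rw [← Complex.exp_add]; congr 1; push_cast; ring
  have hz1 : (t:ℂ) + (-π : ℝ) * Complex.I ≠ 0 := by
    intro h; have := congrArg Complex.im h; simp [Real.pi_ne_zero] at this
  have hz2 : (t:ℂ) + (π : ℝ) * Complex.I ≠ 0 := by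
    intro h; have := congrArg Complex.im h; simp [Real.pi_ne_zero] at this
  have n1 := exp_ne_one h0 h1.le (z := (t:ℂ) + (-π : ℝ) * Complex.I)
    (by simp [abs_of_pos Real.pi_pos]; linarith [Real.pi_pos]) hz1
  have n2 := exp_ne_one h0 h1.le (z := (t:ℂ) + (π : ℝ) * Complex.I)
    (by simp [abs_of_pos Real.pi_pos]; linarith [Real.pi_pos]) hz2
  have hd : (Complex.exp (α * t) - 2 * Complex.cos (π * α : ℝ) + Complex.exp (-(α * t))) ≠ 0 := by
    have := (den_pos h0 h1 t).ne'
    exact_mod_cast this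
  have hp : (p α t : ℂ) = α * Complex.sin (π * α : ℝ) / ((1 - α) * π) /
    (Complex.exp (α * t) - 2 * Complex.cos (π * α : ℝ) + Complex.exp (-(α * t))) := by
    unfold p; push_cast; rfl
  have hE : Complex.exp (α * t) * Complex.exp (-(α * t)) = 1 := by
    rw [← Complex.exp_add]; simp
  have hsc := Complex.sin_sq_add_cos_sq (π * α : ℝ)
  unfold K
  rw [hp, e1]
  rw [e2] at n1 ⊢
  rw [e3] at n2 ⊢
  rw [Complex.exp_mul_I] at n1 ⊢
  rw [Complex.exp_mul_I, Complex.cos_neg, Complex.sin_neg] at n2 ⊢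
  generalize Complex.cos (π * α : ℝ) = c at *
  generalize Complex.sin (π * α : ℝ) = s at *
  generalize Complex.exp (-(α * t)) = E at *
  generalize Complex.exp (α * t) = E' at *
  have hI := Complex.I_sq
  have hEne : E ≠ 0 := by rintro rfl; simp at hE
  have hprod : (1 - E * (c + s * Complex.I)) * (1 - E * (c + -s * Complex.I)) = E * (E' - 2 * c + E) := by
    linear_combination (-E^2*s^2) * hI + E^2 * hsc - hE
  rw [sub_sub_sub_cancel_right, div_sub_div _ _ n1 n2, hprod]
  field_simp
  ring

lemma norm_ge1 (σ φ t : ℝ) (_hφ : 0 < Real.sin φ) :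
    Real.exp σ * Real.sin φ ≤ ‖Complex.exp (σ + φ * Complex.I) + Complex.exp t‖ := by
  refine le_trans (le_of_eq ?_) ((le_abs_self _).trans (Complex.abs_im_le_norm _))
  simp [Complex.exp_im]

lemma norm_ge2 (σ φ t : ℝ) (_hφ : 0 < Real.sin φ) :
    Real.exp t * Real.sin φ ≤ ‖Complex.exp (σ + φ * Complex.I) + Complex.exp t‖ := by
  have e : ‖Complex.exp (σ + φ * Complex.I) + Complex.exp t‖ =
      ‖Complex.exp (((-φ : ℝ) : ℂ) * Complex.I) * (Complex.exp (σ + φ * Complex.I) + Complex.exp t)‖ := by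
    rw [norm_mul, Complex.norm_exp_ofReal_mul_I, one_mul]
  rw [e, mul_add, ← Complex.exp_add, ← Complex.exp_add]
  refine le_trans (le_of_eq ?_) ((neg_le_abs _).trans (Complex.abs_im_le_norm _))
  simp [Complex.exp_im]

lemma ne_zero1 (σ φ t : ℝ) (hφ : 0 < Real.sin φ) :
    Complex.exp (σ + φ * Complex.I) + Complex.exp t ≠ 0 := by
  rw [← norm_pos_iff]
  exact lt_of_lt_of_le (by positivity) (norm_ge1 σ φ t hφ)

lemma contour_int {α : ℝ} (h0 : 0 < α) (h1 : α < 1) (σ φ : ℝ) (hφ : 0 < Real.sin φ) :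
    Integrable (fun t : ℝ => (p α t : ℂ) / (Complex.exp (σ + φ * Complex.I) + Complex.exp t)) := by
  have hp := p_cont h0 h1
  refine ((p_int h0 h1).mul_const (1 / (Real.exp σ * Real.sin φ))).mono' ?_
    (Eventually.of_forall fun t => ?_)
  · refine Continuous.aestronglyMeasurable ?_
    exact Continuous.div (by fun_prop) (by fun_prop) fun t => ne_zero1 σ φ t hφ
  · rw [norm_div, Complex.norm_real, Real.norm_of_nonneg (p_pos h0 h1 t).le, div_eq_mul_one_div]
    have := p_pos h0 h1 t
    gcongr
    exact norm_ge1 σ φ t hφ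

theorem contour {α : ℝ} (h0 : 0 < α) (h1 : α < 1) (σ φ : ℝ) (hφ0 : 0 < φ) (hφ : φ < π) :
    ∫ t : ℝ, (p α t : ℂ) / (Complex.exp (σ + φ * Complex.I) + Complex.exp t) =
      - K α (σ + φ * Complex.I) / ((1 - α) * Complex.exp (σ + φ * Complex.I)) := by
  have hs := Real.sin_pos_of_pos_of_lt_pi hφ0 hφ
  have hint := contour_int h0 h1 σ φ hs
  have hne := fun t => ne_zero1 σ φ t hs
  obtain ⟨N, hN, hNK⟩ := exists_N h0 h1
  have hlim : ((σ:ℂ) + φ * Complex.I).im = φ := by simp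
  have hlre : ((σ:ℂ) + φ * Complex.I).re = σ := by simp
  set l : ℂ := σ + φ * Complex.I with hl
  have hl0 : l ≠ 0 := by intro h; rw [h] at hlim; simp at hlim; linarith
  have hls : strip ∈ 𝓝 l := strip_open.mem_nhds (by
    simp only [strip, mem_ofPred_eq, hlim, abs_of_pos hφ0]; linarith)
  set s : ℂ := Complex.exp l with hsdef
  have hs0 : s ≠ 0 := Complex.exp_ne_zero _
  let D : ℂ → ℂ := fun z => s - Complex.exp z
  let f : ℂ → ℂ := fun z => dslope N l z / dslope D l z
  have hD0 : ∀ z : ℂ, |z.im| ≤ π → z ≠ l → D z ≠ 0 := by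
    intro z hz hzl h
    have : Complex.exp z = Complex.exp l := by simp only [D] at h; rw [← hsdef]; linear_combination -h
    rw [Complex.exp_eq_exp_iff_exists_int] at this
    obtain ⟨n, hn⟩ := this
    have him := congrArg Complex.im hn
    rw [Complex.add_im, hlim] at him
    simp at him
    rw [abs_le] at hz
    have hn0 : n = 0 := by
      have a : (n:ℝ) < 1 := by nlinarith [Real.pi_pos]
      have b : (-1:ℝ) < n := by nlinarith [Real.pi_pos]
      have a' : n < 1 := by exact_mod_cast a
      have b' : -1 < n := by exact_mod_cast b
      omega
    apply hzl; rw [hn, hn0]; simp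
  have hf : ∀ z : ℂ, z ≠ l → f z = (N z - N l) / D z := by
    intro z hz
    simp only [f, dslope_of_ne _ hz, slope_def_field]
    have : D l = 0 := by simp [D, hsdef]
    rw [this, sub_zero, div_div_div_cancel_right₀ (sub_ne_zero.2 hz)]
  have hfd : ∀ z : ℂ, |z.im| ≤ π → DifferentiableAt ℂ f z := by
    intro z hz
    have hzs : strip ∈ 𝓝 z := strip_open.mem_nhds (by
      simp only [strip, mem_ofPred_eq]; linarith [Real.pi_pos])
    have d1 : DifferentiableAt ℂ (dslope N l) z :=
      ((Complex.differentiableOn_dslope hls).2 hN).differentiableAt hzs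
    have d2 : DifferentiableAt ℂ (dslope D l) z := by
      have : DifferentiableOn ℂ D univ := by simp only [D]; fun_prop
      exact ((Complex.differentiableOn_dslope univ_mem).2 this).differentiableAt univ_mem
    refine d1.div d2 ?_
    rcases eq_or_ne z l with hzl | hzl
    · have : HasDerivAt D (-Complex.exp l) l := (Complex.hasDerivAt_exp l).const_sub s
      rw [hzl, dslope_same, this.deriv]; simp
    · rw [dslope_of_ne _ hzl, slope_def_field]
      have : D l = 0 := by simp [D, hsdef]
      rw [this, sub_zero]
      exact div_ne_zero (hD0 z hz hzl) (sub_ne_zero.2 hzl)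
  have hfhor : ∀ (c : ℝ), |c| ≤ π → Continuous (fun x : ℝ => f (x + c * Complex.I)) := by
    intro c hc
    rw [continuous_iff_continuousAt]
    intro x
    have : ContinuousAt f (x + c * Complex.I) := (hfd _ (by simpa using hc)).continuousAt
    exact ContinuousAt.comp (f := fun x : ℝ => (x:ℂ) + c * Complex.I) this (by fun_prop)
  have hfver : ∀ (T : ℝ), ContinuousOn (fun y : ℝ => f (T + y * Complex.I)) (uIcc (-π) π) := by
    intro T y hy
    rw [uIcc_of_le (by linarith [Real.pi_pos])] at hy
    have : ContinuousAt f (T + y * Complex.I) := (hfd _ (by simpa using abs_le.2 hy)).continuousAt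
    exact (ContinuousAt.comp (f := fun y : ℝ => (T:ℂ) + y * Complex.I) this (by fun_prop)).continuousWithinAt
  -- limits
  have nt : ∀ᶠ z in comap Complex.re atTop, N z = K α z ∧ z ≠ l := by
    have : ∀ᶠ z in comap Complex.re atTop, max 0 σ < z.re :=
      tendsto_comap.eventually (eventually_gt_atTop (max 0 σ))
    filter_upwards [this] with z hz
    refine ⟨hNK z ?_, ?_⟩
    · rintro rfl; simp at hz
    · rintro rfl; rw [hlre] at hz; simp at hz
  have nb : ∀ᶠ z in comap Complex.re atBot, N z = K α z ∧ z ≠ l := by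
    have : ∀ᶠ z in comap Complex.re atBot, z.re < min 0 σ :=
      tendsto_comap.eventually (eventually_lt_atBot (min 0 σ))
    filter_upwards [this] with z hz
    refine ⟨hNK z ?_, ?_⟩
    · rintro rfl; simp at hz
    · rintro rfl; rw [hlre] at hz; simp at hz
  have lt : Tendsto f (comap Complex.re atTop) (𝓝 0) := by
    have b := exp_lim_top one_pos
    simp only [Complex.ofReal_one, one_mul] at b
    have : Tendsto (fun z => (K α z - N l) * (Complex.exp (-z) / (s * Complex.exp (-z) - 1)))
        (comap Complex.re atTop) (𝓝 ((α - 1 - N l) * (0 / (s * 0 - 1)))) :=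
      ((K_lim_top h0).sub tendsto_const_nhds).mul
        (b.div ((b.const_mul s).sub tendsto_const_nhds) (by simp))
    simp only [zero_div, mul_zero] at this
    refine this.congr' ?_
    filter_upwards [nt] with z hz
    rw [hf z hz.2, hz.1]
    have : s * Complex.exp (-z) - 1 = Complex.exp (-z) * D z := by
      have e : Complex.exp (-z) * Complex.exp z = 1 := by rw [← Complex.exp_add]; simp
      simp only [D]; linear_combination e
    rw [this, div_mul_cancel_left₀ (Complex.exp_ne_zero _), div_eq_mul_inv]
  have lb : Tendsto f (comap Complex.re atBot) (𝓝 (-N l / s)) := by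
    have b := exp_lim_bot one_pos
    simp only [Complex.ofReal_one, one_mul] at b
    have : Tendsto (fun z => (K α z - N l) / (s - Complex.exp z))
        (comap Complex.re atBot) (𝓝 ((0 - N l) / (s - 0))) :=
      ((K_lim_bot h0).sub tendsto_const_nhds).div (tendsto_const_nhds.sub b) (by simpa using hs0)
    simp only [zero_sub, sub_zero] at this
    refine this.congr' ?_
    filter_upwards [nb] with z hz
    rw [hf z hz.2, hz.1]
  have vt := vert_lim lt (Eventually.of_forall hfver)
  have vb := (vert_lim lb (Eventually.of_forall hfver)).comp tendsto_neg_atTop_atBot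
  -- horizontal
  have hhor : ∀ t : ℝ, f (t + (-π : ℝ) * Complex.I) - f (t + (π : ℝ) * Complex.I) =
      2 * π * Complex.I * (1 - α) * ((p α t : ℂ) / (s + Complex.exp t)) := by
    intro t
    have hz1 : (t:ℂ) + (-π : ℝ) * Complex.I ≠ 0 := by
      intro h; have := congrArg Complex.im h; simp [Real.pi_ne_zero] at this
    have hz2 : (t:ℂ) + (π : ℝ) * Complex.I ≠ 0 := by
      intro h; have := congrArg Complex.im h; simp [Real.pi_ne_zero] at this
    have hz3 : (t:ℂ) + (-π : ℝ) * Complex.I ≠ l := by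
      intro h; have := congrArg Complex.im h; rw [hlim] at this; simp at this; linarith
    have hz4 : (t:ℂ) + (π : ℝ) * Complex.I ≠ l := by
      intro h; have := congrArg Complex.im h; rw [hlim] at this; simp at this; linarith
    rw [hf _ hz3, hf _ hz4, hNK _ hz1, hNK _ hz2]
    have d1 : D ((t:ℂ) + (-π : ℝ) * Complex.I) = s + Complex.exp t := by
      simp only [D]; rw [Complex.exp_add]; simp [Complex.exp_neg]
    have d2 : D ((t:ℂ) + (π : ℝ) * Complex.I) = s + Complex.exp t := by
      simp only [D]; rw [Complex.exp_add]; simp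
    rw [d1, d2, ← sub_div, sub_sub_sub_cancel_right, K_jump h0 h1]
    ring
  have hrect : ∀ T : ℝ, 2 * π * Complex.I * (1 - α) *
        (∫ t in (-T)..T, (p α t : ℂ) / (s + Complex.exp t)) +
      Complex.I * (∫ y in (-π)..π, f (T + y * Complex.I)) -
      Complex.I * (∫ y in (-π)..π, f ((-T : ℝ) + y * Complex.I)) = 0 := by
    intro T
    have := Complex.integral_boundary_rect_eq_zero_of_differentiableOn f
      (⟨-T, -π⟩ : ℂ) (⟨T, π⟩ : ℂ) (by
        intro z hz
        refine (hfd z ?_).differentiableWithinAt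
        have := hz.2
        simp only [mem_preimage] at this
        rw [uIcc_of_le (by linarith [Real.pi_pos])] at this
        exact abs_le.2 this)
    simp only [smul_eq_mul] at this
    rw [← intervalIntegral.integral_sub
      ((hfhor (-π) (by simp [abs_of_pos Real.pi_pos])).intervalIntegrable _ _)
      ((hfhor π (by simp [abs_of_pos Real.pi_pos])).intervalIntegrable _ _)] at this
    simp only [hhor] at this
    rw [intervalIntegral.integral_const_mul] at this
    exact this
  have L1 := intervalIntegral_tendsto_integral hint tendsto_neg_atTop_atBot tendsto_id
  have L := ((L1.const_mul (2 * π * Complex.I * (1 - α))).add (vt.const_mul Complex.I)).sub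
    (vb.const_mul Complex.I)
  have L0 := tendsto_nhds_unique (L.congr fun T => hrect T) tendsto_const_nhds
  have ha : (1 - (α:ℂ)) ≠ 0 := by
    have : (1 - α) ≠ 0 := by linarith
    exact_mod_cast this
  have hπ : (π:ℂ) ≠ 0 := by exact_mod_cast Real.pi_ne_zero
  rw [hNK l hl0] at L0
  rw [eq_div_iff (mul_ne_zero ha hs0)]
  generalize (∫ t : ℝ, (p α t : ℂ) / (s + Complex.exp t)) = J at *
  have h2 : (2 * π * Complex.I) ≠ 0 := by simp [hπ]
  apply mul_left_cancel₀ h2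
  have e : -K α l / s * s = -K α l := div_mul_cancel₀ _ hs0
  linear_combination s * L0 + (2 * π * Complex.I) * e

lemma hasDerivAt_log_norm {F : ℝ → ℂ} {F' : ℂ} {x : ℝ} (h : HasDerivAt F F' x) (hx : F x ≠ 0) :
    HasDerivAt (fun y => Real.log ‖F y‖) (F' / F x).re x := by
  have h1 := (h.norm_sq.log (by positivity)).const_mul (1 / 2 : ℝ)
  have e : (fun y => (1 / 2 : ℝ) * Real.log (‖F y‖ ^ 2)) = fun y => Real.log ‖F y‖ := by
    funext y; rw [Real.log_pow]; push_cast; ring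
  rw [e] at h1
  refine h1.congr_deriv ?_
  rw [Complex.inner, Complex.div_re, ← Complex.normSq_eq_norm_sq]
  simp
  ring

lemma deriv_l (a : ℝ) (σ φ : ℝ) : HasDerivAt (fun σ : ℝ => Complex.exp (a * (σ + φ * Complex.I)))
    (a * Complex.exp (a * (σ + φ * Complex.I))) σ := by
  have h : HasDerivAt (fun σ : ℝ => (a:ℂ) * ((σ:ℂ) + φ * Complex.I)) (a * 1) σ :=
    ((hasDerivAt_id' σ).ofReal_comp.add_const _).const_mul _
  convert h.cexp using 1
  ring

/-- right-hand side -/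
noncomputable def W (α σ φ : ℝ) : ℝ :=
  1 / (1 - α) * (Real.log ‖1 - Complex.exp (σ + φ * Complex.I)‖ -
    Real.log ‖1 - Complex.exp (α * (σ + φ * Complex.I))‖)

lemma one_sub_ne {a : ℝ} (h0 : 0 < a) (h1 : a ≤ 1) (σ φ : ℝ) (hφ0 : 0 < φ) (hφ : φ < π) :
    1 - Complex.exp (a * (σ + φ * Complex.I)) ≠ 0 := by
  have := exp_ne_one h0 h1 (z := -(σ + φ * Complex.I)) (by
    simp [abs_of_pos hφ0]; linarith) (by
    intro h; have := congrArg Complex.im h; simp at this; linarith)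
  rwa [mul_neg, neg_neg] at this

lemma frac (c w : ℂ) : c * Complex.exp w / (1 - Complex.exp w) = - (c / (1 - Complex.exp (-w))) := by
  have : 1 - Complex.exp w = -(Complex.exp w * (1 - Complex.exp (-w))) := by
    rw [mul_sub, ← Complex.exp_add]; simp
  rw [this, mul_comm c, div_neg, mul_div_mul_left _ _ (Complex.exp_ne_zero w)]

lemma W_deriv {α : ℝ} (h0 : 0 < α) (h1 : α < 1) (σ φ : ℝ) (hφ0 : 0 < φ) (hφ : φ < π) :
    HasDerivAt (fun σ => W α σ φ) (-(1 / (1 - α)) * (K α (σ + φ * Complex.I)).re) σ := by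
  have a1 := hasDerivAt_log_norm ((deriv_l 1 σ φ).const_sub 1) (one_sub_ne one_pos le_rfl σ φ hφ0 hφ)
  have a2 := hasDerivAt_log_norm ((deriv_l α σ φ).const_sub 1) (one_sub_ne h0 h1.le σ φ hφ0 hφ)
  have := (a1.sub a2).const_mul (1 / (1 - α))
  simp only [neg_div, frac] at this
  simp only [Complex.ofReal_one, one_mul] at this
  unfold W
  refine this.congr_deriv ?_
  unfold K
  simp only [Complex.sub_re, Complex.neg_re]
  ring

lemma int_deriv {α : ℝ} (h0 : 0 < α) (h1 : α < 1) (σ φ : ℝ) (hφ0 : 0 < φ) (hφ : φ < π)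
    (hI : Integrable fun t => p α t * Real.log ‖Complex.exp (σ + φ * Complex.I) + Complex.exp t‖) :
    HasDerivAt (fun σ : ℝ => ∫ t : ℝ, p α t * Real.log ‖Complex.exp (σ + φ * Complex.I) + Complex.exp t‖)
      (-(1 / (1 - α)) * (K α (σ + φ * Complex.I)).re) σ := by
  have hs := Real.sin_pos_of_pos_of_lt_pi hφ0 hφ
  have hp := p_cont h0 h1
  have key := hasDerivAt_integral_of_dominated_loc_of_deriv_le (μ := volume)
    (F := fun (σ t : ℝ) => p α t * Real.log ‖Complex.exp (σ + φ * Complex.I) + Complex.exp t‖)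
    (F' := fun (σ t : ℝ) => p α t * (Complex.exp (σ + φ * Complex.I) /
      (Complex.exp (σ + φ * Complex.I) + Complex.exp t)).re)
    (x₀ := σ) (s := univ) (bound := fun t => p α t * (1 / Real.sin φ)) univ_mem
    (Eventually.of_forall fun σ' => by
      refine Continuous.aestronglyMeasurable (hp.mul ?_)
      exact Continuous.log (by fun_prop) fun t => norm_ne_zero_iff.2 (ne_zero1 σ' φ t hs))
    hI
    (by
      refine Continuous.aestronglyMeasurable (hp.mul (Complex.continuous_re.comp ?_))
      exact Continuous.div (by fun_prop) (by fun_prop) fun t => ne_zero1 σ φ t hs)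
    (Eventually.of_forall fun t σ' _ => by
      rw [norm_mul, Real.norm_of_nonneg (p_pos h0 h1 t).le]
      refine mul_le_mul_of_nonneg_left ?_ (p_pos h0 h1 t).le
      refine (Complex.abs_re_le_norm _).trans ?_
      have b := norm_ge1 σ' φ t hs
      rw [norm_div, div_le_div_iff₀ (norm_pos_iff.2 (ne_zero1 σ' φ t hs)) hs, Complex.norm_exp]
      simpa using b)
    ((p_int h0 h1).mul_const _)
    (Eventually.of_forall fun t σ' _ => by
      have d := (deriv_l 1 σ' φ).add_const (Complex.exp t)
      simp only [Complex.ofReal_one, one_mul] at d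
      exact (hasDerivAt_log_norm d (ne_zero1 σ' φ t hs)).const_mul _)
  refine key.2.congr_deriv ?_
  have c := contour h0 h1 σ φ hφ0 hφ
  have ci := contour_int h0 h1 σ φ hs
  have e : ∀ t : ℝ, p α t * (Complex.exp (σ + φ * Complex.I) /
      (Complex.exp (σ + φ * Complex.I) + Complex.exp t)).re =
      (Complex.exp (σ + φ * Complex.I) * ((p α t : ℂ) / (Complex.exp (σ + φ * Complex.I) + Complex.exp t))).re := by
    intro t
    rw [← Complex.re_ofReal_mul]; congr 1; ring
  simp only [e]
  have := integral_re (ci.const_mul (Complex.exp (σ + φ * Complex.I)))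
  simp only [RCLike.re_to_complex] at this
  rw [this, integral_const_mul, c]
  have hne := Complex.exp_ne_zero (σ + φ * Complex.I)
  have ha : (1 - (α:ℂ)) ≠ 0 := by
    have : (1 - α) ≠ 0 := by linarith
    exact_mod_cast this
  have : Complex.exp (σ + φ * Complex.I) * (-K α (σ + φ * Complex.I) / ((1 - α) * Complex.exp (σ + φ * Complex.I)))
      = ((-(1 / (1 - α)) : ℝ) : ℂ) * K α (σ + φ * Complex.I) := by
    push_cast; field_simp
  rw [this, Complex.re_ofReal_mul]

/-- dominating function -/
noncomputable def dom (α σ t : ℝ) : ℝ :=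
  p α t * |Real.log (abs (Real.exp t - Real.exp σ))| + (p α t * |t| + p α t * (Real.log 2 + |σ|))

lemma dom_int {α : ℝ} (h0 : 0 < α) (h1 : α < 1) (σ : ℝ) : Integrable (dom α σ) :=
  (p_log_int h0 h1 σ).add ((p_abs_int h0 h1).add ((p_int h0 h1).mul_const _))

lemma dom_bound {α : ℝ} (h0 : 0 < α) (h1 : α < 1) (σ φ t : ℝ) (hne : t ≠ σ) :
    ‖p α t * Real.log ‖Complex.exp (σ + φ * Complex.I) + Complex.exp t‖‖ ≤ dom α σ t := by
  have hE : ‖Complex.exp (σ + φ * Complex.I)‖ = Real.exp σ := by rw [Complex.norm_exp]; simp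
  have hT : ‖Complex.exp (t : ℂ)‖ = Real.exp t := by rw [Complex.norm_exp]; simp
  have lo : abs (Real.exp t - Real.exp σ) ≤ ‖Complex.exp (σ + φ * Complex.I) + Complex.exp t‖ := by
    have := abs_norm_sub_norm_le (Complex.exp (t:ℂ)) (-Complex.exp (σ + φ * Complex.I))
    rw [norm_neg, hE, hT, sub_neg_eq_add, add_comm (Complex.exp (t:ℂ))] at this
    exact this
  have hi : ‖Complex.exp (σ + φ * Complex.I) + Complex.exp t‖ ≤ 2 * Real.exp (|t| + |σ|) := by
    refine (norm_add_le _ _).trans ?_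
    rw [hE, hT]
    have a : Real.exp σ ≤ Real.exp (|t| + |σ|) :=
      Real.exp_le_exp.2 (by linarith [le_abs_self σ, abs_nonneg t])
    have b : Real.exp t ≤ Real.exp (|t| + |σ|) :=
      Real.exp_le_exp.2 (by linarith [le_abs_self t, abs_nonneg σ])
    linarith
  have hpos : 0 < abs (Real.exp t - Real.exp σ) := by
    rw [abs_pos, sub_ne_zero]; exact fun h => hne (Real.exp_injective h)
  have l1 := Real.log_le_log hpos lo
  have l2 := Real.log_le_log (hpos.trans_le lo) hi
  rw [Real.log_mul (by norm_num) (Real.exp_pos _).ne', Real.log_exp] at l2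
  rw [norm_mul, Real.norm_of_nonneg (p_pos h0 h1 t).le]
  unfold dom
  rw [← mul_add, ← mul_add]
  refine mul_le_mul_of_nonneg_left ?_ (p_pos h0 h1 t).le
  have := Real.log_nonneg one_le_two
  rw [Real.norm_eq_abs, abs_le]
  constructor
  · linarith [neg_abs_le (Real.log (abs (Real.exp t - Real.exp σ))), abs_nonneg t, abs_nonneg σ]
  · linarith [abs_nonneg (Real.log (abs (Real.exp t - Real.exp σ)))]

lemma ae_ne (σ : ℝ) : ∀ᵐ t : ℝ, t ≠ σ := by
  simp [ae_iff]

lemma meas_aux {α : ℝ} (h0 : 0 < α) (h1 : α < 1) (σ φ : ℝ) : AEStronglyMeasurable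
    (fun t : ℝ => p α t * Real.log ‖Complex.exp (σ + φ * Complex.I) + Complex.exp t‖) := by
  have hp := (p_cont h0 h1).measurable
  exact Measurable.aestronglyMeasurable (by fun_prop)

lemma log_int {α : ℝ} (h0 : 0 < α) (h1 : α < 1) (σ φ : ℝ) :
    Integrable fun t : ℝ => p α t * Real.log ‖Complex.exp (σ + φ * Complex.I) + Complex.exp t‖ := by
  refine (dom_int h0 h1 σ).mono' (meas_aux h0 h1 σ φ) ?_
  filter_upwards [ae_ne σ] with t ht using dom_bound h0 h1 σ φ t ht

lemma exp_lim (a φ : ℝ) (ha : 0 < a) :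
    Tendsto (fun σ : ℝ => Complex.exp (a * (σ + φ * Complex.I))) atBot (𝓝 0) := by
  refine (exp_lim_bot ha).comp ?_
  rw [tendsto_comap_iff]
  refine tendsto_id.congr fun x => by simp

lemma W_lim {α : ℝ} (h0 : 0 < α) (φ : ℝ) : Tendsto (fun σ => W α σ φ) atBot (𝓝 0) := by
  have e : ∀ a : ℝ, 0 < a → Tendsto (fun σ : ℝ => Real.log ‖1 - Complex.exp (a * (σ + φ * Complex.I))‖) atBot (𝓝 0) := by
    intro a ha
    have : Tendsto (fun σ : ℝ => ‖1 - Complex.exp (a * (σ + φ * Complex.I))‖) atBot (𝓝 1) := by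
      simpa using (tendsto_const_nhds.sub (exp_lim a φ ha)).norm (a := (1:ℂ) - 0)
    simpa using this.log one_ne_zero
  have a := e 1 one_pos
  simp only [Complex.ofReal_one, one_mul] at a
  simpa [W] using (a.sub (e α h0)).const_mul (1 / (1 - α))

lemma int_lim {α : ℝ} (h0 : 0 < α) (h1 : α < 1) (φ : ℝ) (hφ0 : 0 < φ) (hφ : φ < π) :
    Tendsto (fun σ : ℝ => ∫ t : ℝ, p α t * Real.log ‖Complex.exp (σ + φ * Complex.I) + Complex.exp t‖)
      atBot (𝓝 0) := by
  have hs := Real.sin_pos_of_pos_of_lt_pi hφ0 hφ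
  rw [← p_mean (α := α)]
  refine tendsto_integral_filter_of_dominated_convergence
    (fun t => p α t * |t| + p α t * (Real.log 2 + |Real.log (Real.sin φ)|))
    (Eventually.of_forall fun σ => meas_aux h0 h1 σ φ) ?_
    ((p_abs_int h0 h1).add ((p_int h0 h1).mul_const _)) ?_
  · filter_upwards [eventually_le_atBot (0:ℝ)] with σ hσ
    refine Eventually.of_forall fun t => ?_
    have lo := norm_ge2 σ φ t hs
    have hi : ‖Complex.exp (σ + φ * Complex.I) + Complex.exp t‖ ≤ 2 * Real.exp (|t|) := by
      refine (norm_add_le _ _).trans ?_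
      rw [Complex.norm_exp, Complex.norm_exp]
      have a : Real.exp σ ≤ Real.exp (|t|) := Real.exp_le_exp.2 (by linarith [abs_nonneg t])
      have b : Real.exp t ≤ Real.exp (|t|) := Real.exp_le_exp.2 (le_abs_self t)
      simp only [Complex.add_re, Complex.ofReal_re, Complex.mul_re, Complex.I_re, Complex.ofReal_im,
        Complex.I_im, mul_zero, zero_mul, sub_zero, add_zero]
      linarith
    have hpos : 0 < Real.exp t * Real.sin φ := by positivity
    have l1 := Real.log_le_log hpos lo
    have l2 := Real.log_le_log (hpos.trans_le lo) hi
    rw [Real.log_mul (by norm_num) (Real.exp_pos _).ne', Real.log_exp] at l2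
    rw [Real.log_mul (Real.exp_pos _).ne' hs.ne', Real.log_exp] at l1
    rw [norm_mul, Real.norm_of_nonneg (p_pos h0 h1 t).le, ← mul_add]
    refine mul_le_mul_of_nonneg_left ?_ (p_pos h0 h1 t).le
    have := Real.log_nonneg one_le_two
    rw [Real.norm_eq_abs, abs_le]
    constructor
    · linarith [neg_abs_le (Real.log (Real.sin φ)), neg_abs_le t]
    · linarith [abs_nonneg (Real.log (Real.sin φ))]
  · refine Eventually.of_forall fun t => ?_
    refine Tendsto.const_mul _ ?_
    have a := exp_lim 1 φ one_pos
    simp only [Complex.ofReal_one, one_mul] at a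
    have b := (a.add_const (Complex.exp t)).norm.log (by simp)
    simpa [Complex.norm_exp] using b

theorem main_open {α : ℝ} (h0 : 0 < α) (h1 : α < 1) (σ φ : ℝ) (hφ0 : 0 < φ) (hφ : φ < π) :
    ∫ t : ℝ, p α t * Real.log ‖Complex.exp (σ + φ * Complex.I) + Complex.exp t‖ = W α σ φ := by
  let H : ℝ → ℝ := fun σ => (∫ t : ℝ, p α t * Real.log ‖Complex.exp (σ + φ * Complex.I) + Complex.exp t‖) - W α σ φ
  have hd : ∀ σ, HasDerivAt H 0 σ := fun σ => by
    have := (int_deriv h0 h1 σ φ hφ0 hφ (log_int h0 h1 σ φ)).sub (W_deriv h0 h1 σ φ hφ0 hφ)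
    rwa [sub_self] at this
  have hc := is_const_of_deriv_eq_zero (f := H) (fun σ => (hd σ).differentiableAt) (fun σ => (hd σ).deriv)
  have hl : Tendsto H atBot (𝓝 0) := by
    simpa using (int_lim h0 h1 φ hφ0 hφ).sub (W_lim h0 φ)
  have hl2 : Tendsto H atBot (𝓝 (H σ)) := tendsto_const_nhds.congr fun x => hc σ x
  have := tendsto_nhds_unique hl2 hl
  simp only [H] at this
  linarith

theorem main_closed {α : ℝ} (h0 : 0 < α) (h1 : α < 1) (σ φ : ℝ) (hφ : φ ∈ closure (Ioo 0 π))
    (hn1 : 1 - Complex.exp (σ + φ * Complex.I) ≠ 0) (hn2 : 1 - Complex.exp (α * (σ + φ * Complex.I)) ≠ 0) :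
    ∫ t : ℝ, p α t * Real.log ‖Complex.exp (σ + φ * Complex.I) + Complex.exp t‖ = W α σ φ := by
  have : (𝓝[Ioo 0 π] φ).NeBot := mem_closure_iff_nhdsWithin_neBot.1 hφ
  have hW : Tendsto (fun φ => W α σ φ) (𝓝[Ioo 0 π] φ) (𝓝 (W α σ φ)) := by
    refine (ContinuousAt.tendsto ?_).mono_left nhdsWithin_le_nhds
    unfold W
    refine ContinuousAt.mul (by fun_prop) (ContinuousAt.sub ?_ ?_)
    · exact ContinuousAt.log (by fun_prop) (norm_ne_zero_iff.2 hn1)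
    · exact ContinuousAt.log (by fun_prop) (norm_ne_zero_iff.2 hn2)
  have hI : Tendsto (fun φ : ℝ => ∫ t : ℝ, p α t * Real.log ‖Complex.exp (σ + φ * Complex.I) + Complex.exp t‖)
      (𝓝[Ioo 0 π] φ) (𝓝 (∫ t : ℝ, p α t * Real.log ‖Complex.exp (σ + φ * Complex.I) + Complex.exp t‖)) := by
    refine tendsto_integral_filter_of_dominated_convergence (dom α σ)
      (Eventually.of_forall fun φ => meas_aux h0 h1 σ φ) (Eventually.of_forall fun φ => ?_)
      (dom_int h0 h1 σ) ?_
    · filter_upwards [ae_ne σ] with t ht using dom_bound h0 h1 σ φ t ht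
    · filter_upwards [ae_ne σ] with t ht
      refine Tendsto.const_mul _ ((ContinuousAt.tendsto ?_).mono_left nhdsWithin_le_nhds)
      refine ContinuousAt.log (by fun_prop) (norm_ne_zero_iff.2 fun h => ht ?_)
      have e := congrArg norm (eq_neg_of_add_eq_zero_left h)
      rw [norm_neg, Complex.norm_exp, Complex.norm_exp] at e
      simp at e
      exact e.symm
  refine tendsto_nhds_unique (hI.congr' ?_) hW
  filter_upwards [self_mem_nhdsWithin] with ψ hψ using main_open h0 h1 σ ψ hψ.1 hψ.2

lemma dens_change {α : ℝ} (h0 : 0 < α) (h1 : α < 1) (t : ℝ) :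
    |(-Real.exp t / (1 + Real.exp t) ^ 2)| * bfryDensity α (1 / (1 + Real.exp t)) = p α t := by
  have hA : 0 < 1 + Real.exp t := by positivity
  set L := Real.log (1 + Real.exp t) with hL
  have hAL : 1 + Real.exp t = Real.exp L := (Real.exp_log hA).symm
  have hu : 1 / (1 + Real.exp t) = Real.exp (-L) := by rw [hAL, Real.exp_neg, one_div]
  have hv : 1 - Real.exp (-L) = Real.exp (t - L) := by
    rw [← hu, Real.exp_sub, ← hAL]; field_simp; ring
  have hd : |(-Real.exp t / (1 + Real.exp t) ^ 2)| = Real.exp (t - 2 * L) := by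
    rw [neg_div, abs_neg, abs_of_pos (by positivity), hAL, Real.exp_sub, ← Real.exp_nat_mul]
    norm_num
  unfold bfryDensity p
  rw [hd, hu, hv]
  simp only [← Real.exp_mul]
  have e1 : Real.exp (-L * (2 * α)) - 2 * Real.exp (-L * α) * Real.exp ((t - L) * α) * Real.cos (Real.pi * α)
      + Real.exp ((t - L) * (2 * α)) = Real.exp (α * t - 2 * α * L) *
      (Real.exp (α * t) - 2 * Real.cos (Real.pi * α) + Real.exp (-(α * t))) := by
    have a1 : Real.exp (-L * (2 * α)) = Real.exp (α * t - 2 * α * L) * Real.exp (-(α * t)) := by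
      rw [← Real.exp_add]; congr 1; ring
    have a2 : Real.exp (-L * α) * Real.exp ((t - L) * α) = Real.exp (α * t - 2 * α * L) := by
      rw [← Real.exp_add]; congr 1; ring
    have a3 : Real.exp ((t - L) * (2 * α)) = Real.exp (α * t - 2 * α * L) * Real.exp (α * t) := by
      rw [← Real.exp_add]; congr 1; ring
    rw [a1, a3]; linear_combination (-2 * Real.cos (Real.pi * α)) * a2
  have e2 : Real.exp (t - 2 * L) * (Real.exp (-L * (α - 1)) * Real.exp ((t - L) * (α - 1))) =
      Real.exp (α * t - 2 * α * L) := by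
    rw [← Real.exp_add, ← Real.exp_add]; congr 1; ring
  rw [e1]
  have hden := (den_pos h0 h1 t).ne'
  have hE := (Real.exp_pos (α * t - 2 * α * L)).ne'
  generalize Real.exp (α * t) - 2 * Real.cos (Real.pi * α) + Real.exp (-(α * t)) = den at *
  generalize α * Real.sin (Real.pi * α) / ((1 - α) * Real.pi) = c at *
  rw [mul_left_comm, ← mul_div_assoc, e2, div_mul_eq_div_div, div_self hE]
  ring

lemma expect {Ω : Type*} [MeasurableSpace Ω] (P : Measure Ω)
    (α : ℝ) (hα0 : 0 < α) (hα1 : α < 1)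
    (G : Ω → ℝ) (hG : Measurable G)
    (hG2 : Measure.map G P
      = (volume.restrict (Set.Ioo (0:ℝ) 1)).withDensity fun u =>
          ENNReal.ofReal (bfryDensity α u)) (x : ℝ) :
    ∫ ω, (if 1 / G ω = x then 0 else Real.log |x - 1 / G ω|) ∂P =
      ∫ t, p α t * Real.log |x - 1 - Real.exp t| := by
  have e : ∀ ω, (if 1 / G ω = x then 0 else Real.log |x - 1 / G ω|) = Real.log |x - 1 / G ω| := by
    intro ω
    split_ifs with h
    · rw [h]; simp
    · rfl
  simp only [e]
  have hm : Measurable (bfryDensity α) := by unfold bfryDensity; fun_prop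
  have hmg : Measurable (fun u : ℝ => Real.log |x - 1 / u|) := by fun_prop
  have i1 := integral_map (μ := P) hG.aemeasurable (f := fun u : ℝ => Real.log |x - 1 / u|)
    hmg.aestronglyMeasurable
  rw [← i1, hG2, integral_withDensity_eq_integral_toReal_smul (by fun_prop)
    (Eventually.of_forall fun u => ENNReal.ofReal_lt_top)]
  have him : Ioo (0:ℝ) 1 = (fun t : ℝ => 1 / (1 + Real.exp t)) '' univ := by
    ext u
    simp only [mem_Ioo, image_univ, mem_range]
    constructor
    · rintro ⟨a, b⟩
      refine ⟨Real.log (1 / u - 1), ?_⟩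
      rw [Real.exp_log]
      · simp
      · rw [sub_pos, lt_div_iff₀ a]; linarith
    · rintro ⟨t, rfl⟩
      have := Real.exp_pos t
      refine ⟨by positivity, ?_⟩
      rw [div_lt_one (by positivity)]; linarith
  rw [him, integral_image_eq_integral_abs_deriv_smul
    (f' := fun t => -Real.exp t / (1 + Real.exp t) ^ 2) MeasurableSet.univ]
  · rw [Measure.restrict_univ]
    refine integral_congr_ae (Eventually.of_forall fun t => ?_)
    have hc := dens_change hα0 hα1 t
    have hb : 0 ≤ bfryDensity α (1 / (1 + Real.exp t)) := by
      by_contra hneg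
      have := p_pos hα0 hα1 t
      rw [← hc] at this
      exact absurd this (not_lt.2 (mul_nonpos_of_nonneg_of_nonpos (abs_nonneg _) (not_le.1 hneg).le))
    simp only [smul_eq_mul]
    rw [ENNReal.toReal_ofReal hb, ← mul_assoc, hc]
    congr 3
    simp; ring
  · intro t _
    have : HasDerivAt (fun t : ℝ => (1 + Real.exp t)⁻¹) (-Real.exp t / (1 + Real.exp t) ^ 2) t :=
      ((Real.hasDerivAt_exp t).const_add 1).inv (by positivity)
    simpa only [one_div] using this.hasDerivWithinAt
  · intro a _ b _ h
    simp only [one_div, inv_inj, add_right_inj] at h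
    exact Real.exp_injective h

end BFRY

/-- Proposition 5.1: for `𝔾` a random variable on `(0,1)` with
density `f_𝔾` and `R_α(x) = E[log|x − 1/𝔾|·1(1/𝔾 ≠ x)]`, one has
`R_α(x) = (1/(2(1−α)))·log(x²/((x−1)^{2α} − 2(x−1)^α cos(πα) + 1))` for `x > 1`
and `R_α(x) = (1/(1−α))·log(x/(1 − (1−x)^α))` for `0 < x ≤ 1`. -/
theorem bfry_phi_formula
    {Ω : Type*} [MeasurableSpace Ω] (P : Measure Ω) [IsProbabilityMeasure P]
    (α : ℝ) (hα0 : 0 < α) (hα1 : α < 1)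
    (𝔾 : Ω → ℝ) (h𝔾meas : Measurable 𝔾)
    (h𝔾 : Measure.map 𝔾 P
      = (volume.restrict (Set.Ioo (0:ℝ) 1)).withDensity fun u =>
          ENNReal.ofReal (bfryDensity α u)) :
    (∀ x : ℝ, 1 < x →
      ∫ ω, (if 1 / 𝔾 ω = x then 0 else Real.log |x - 1 / 𝔾 ω|) ∂P
        = 1 / (2 * (1 - α)) *
            Real.log (x ^ 2 /
              ((x - 1) ^ (2 * α) - 2 * (x - 1) ^ α * Real.cos (Real.pi * α) + 1))) ∧
    (∀ x : ℝ, 0 < x → x ≤ 1 →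
      ∫ ω, (if 1 / 𝔾 ω = x then 0 else Real.log |x - 1 / 𝔾 ω|) ∂P
        = 1 / (1 - α) * Real.log (x / (1 - (1 - x) ^ α))) := by
  have h1α : (1 - α) ≠ 0 := by linarith
  refine ⟨fun x hx => ?_, fun x hx0 hx1 => ?_⟩
  · rw [BFRY.expect P α hα0 hα1 𝔾 h𝔾meas h𝔾 x]
    have hr : 0 < x - 1 := by linarith
    have hσ : Real.exp (Real.log (x - 1)) = x - 1 := Real.exp_log hr
    set σ := Real.log (x - 1) with hσdef
    have hσc : Complex.exp (σ : ℂ) = ((x - 1 : ℝ) : ℂ) := by rw [← hσ]; push_cast; rfl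
    have e1 : Complex.exp (σ + (Real.pi : ℝ) * Complex.I) = -((x - 1 : ℝ) : ℂ) := by
      rw [Complex.exp_add, hσc, Complex.exp_pi_mul_I]; ring
    have e2 : Complex.exp (α * (σ + (Real.pi : ℝ) * Complex.I)) =
        (((x - 1) ^ α : ℝ) : ℂ) * (Complex.cos (Real.pi * α : ℝ) + Complex.sin (Real.pi * α : ℝ) * Complex.I) := by
      rw [← Complex.exp_mul_I, Real.rpow_def_of_pos hr, ← hσdef, Complex.ofReal_exp, ← Complex.exp_add]
      congr 1; push_cast; ring
    have n1 : ‖1 - Complex.exp (σ + (Real.pi : ℝ) * Complex.I)‖ = x := by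
      rw [e1, sub_neg_eq_add, ← Complex.ofReal_one, ← Complex.ofReal_add, Complex.norm_real,
        Real.norm_of_nonneg (by linarith)]
      ring
    have n2 : ‖1 - Complex.exp (α * (σ + (Real.pi : ℝ) * Complex.I))‖ ^ 2 =
        (x - 1) ^ (2 * α) - 2 * (x - 1) ^ α * Real.cos (Real.pi * α) + 1 := by
      rw [e2, ← Complex.normSq_eq_norm_sq, Complex.normSq_apply, ← Complex.ofReal_cos, ← Complex.ofReal_sin,
        mul_comm 2 α, Real.rpow_mul hr.le, Real.rpow_two]
      simp only [Complex.sub_re, Complex.sub_im, Complex.one_re, Complex.one_im, Complex.re_ofReal_mul,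
        Complex.im_ofReal_mul, Complex.add_re, Complex.add_im, Complex.ofReal_re, Complex.ofReal_im,
        Complex.I_re, Complex.I_im, mul_zero, mul_one, zero_add, add_zero]
      linear_combination ((x - 1) ^ α) ^ 2 * Real.sin_sq_add_cos_sq (Real.pi * α)
    have hs := BFRY.sin_pos hα0 hα1
    have n3 : 1 - Complex.exp (α * (σ + (Real.pi : ℝ) * Complex.I)) ≠ 0 := by
      intro h
      have him := congrArg Complex.im h
      rw [e2, ← Complex.ofReal_cos, ← Complex.ofReal_sin] at him
      simp only [Complex.sub_im, Complex.one_im, Complex.im_ofReal_mul, Complex.add_im, Complex.ofReal_im,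
        Complex.I_im, mul_one, zero_add, Complex.zero_im] at him
      have : 0 < (x - 1) ^ α * Real.sin (Real.pi * α) := by positivity
      linarith
    have n1' : 1 - Complex.exp (σ + (Real.pi : ℝ) * Complex.I) ≠ 0 := by
      rw [← norm_ne_zero_iff, n1]; linarith
    have main := BFRY.main_closed hα0 hα1 σ Real.pi (by
      rw [closure_Ioo Real.pi_pos.ne]; exact ⟨Real.pi_pos.le, le_rfl⟩) n1' n3
    have eI : ∀ t : ℝ, ‖Complex.exp (σ + (Real.pi : ℝ) * Complex.I) + Complex.exp t‖ = |x - 1 - Real.exp t| := by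
      intro t
      rw [e1, ← Complex.ofReal_exp, ← Complex.ofReal_neg, ← Complex.ofReal_add, Complex.norm_real,
        Real.norm_eq_abs, abs_sub_comm]
      congr 1; ring
    simp only [eI] at main
    rw [main, BFRY.W, n1, ← n2, Real.log_div (by positivity) (pow_ne_zero 2 (norm_ne_zero_iff.2 n3)),
      Real.log_pow, Real.log_pow]
    push_cast
    field_simp
  · rw [BFRY.expect P α hα0 hα1 𝔾 h𝔾meas h𝔾 x]
    rcases eq_or_lt_of_le hx1 with rfl | hx1
    · have : ∀ t : ℝ, BFRY.p α t * Real.log |1 - 1 - Real.exp t| = BFRY.p α t * t := by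
        intro t; rw [sub_self, zero_sub, abs_neg, Real.log_abs, Real.log_exp]
      simp only [this, BFRY.p_mean]
      rw [sub_self, Real.zero_rpow hα0.ne']; simp
    have hr : 0 < 1 - x := by linarith
    have hσ : Real.exp (Real.log (1 - x)) = 1 - x := Real.exp_log hr
    have hra : (1 - x) ^ α < 1 := Real.rpow_lt_one hr.le (by linarith) hα0
    set σ := Real.log (1 - x) with hσdef
    have e1 : Complex.exp (σ + (0 : ℝ) * Complex.I) = ((1 - x : ℝ) : ℂ) := by
      rw [← hσ]; push_cast; simp
    have e2 : Complex.exp (α * (σ + (0 : ℝ) * Complex.I)) = (((1 - x) ^ α : ℝ) : ℂ) := by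
      rw [Real.rpow_def_of_pos hr, ← hσdef, Complex.ofReal_exp]
      congr 1; push_cast; ring
    have n1 : ‖1 - Complex.exp (σ + (0 : ℝ) * Complex.I)‖ = x := by
      rw [e1, ← Complex.ofReal_one, ← Complex.ofReal_sub, Complex.norm_real,
        Real.norm_of_nonneg (by linarith)]
      ring
    have n2 : ‖1 - Complex.exp (α * (σ + (0 : ℝ) * Complex.I))‖ = 1 - (1 - x) ^ α := by
      rw [e2, ← Complex.ofReal_one, ← Complex.ofReal_sub, Complex.norm_real,
        Real.norm_of_nonneg (by linarith)]
    have main := BFRY.main_closed hα0 hα1 σ 0 (by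
      rw [closure_Ioo Real.pi_pos.ne]; exact ⟨le_rfl, Real.pi_pos.le⟩)
      (by rw [← norm_ne_zero_iff, n1]; linarith) (by rw [← norm_ne_zero_iff, n2]; linarith)
    have eI : ∀ t : ℝ, ‖Complex.exp (σ + (0 : ℝ) * Complex.I) + Complex.exp t‖ = |x - 1 - Real.exp t| := by
      intro t
      rw [e1, ← Complex.ofReal_exp, ← Complex.ofReal_add, Complex.norm_real,
        Real.norm_eq_abs, ← abs_neg]
      congr 1; ring
    simp only [eI] at main
    rw [main, BFRY.W, n1, n2, Real.log_div hx0.ne' (by linarith)]
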